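/- Let G=(V,E) be a finite weighted graph and let k ≥ 2 be such that λ_k > 0. Then there exists an integer ℓ with 1 ≤ ℓ ≤ k−1 and a partition of V into nonempty sets P_1,…,P_ℓ such that for every 1 ≤ i ≤ ℓ: φ(G[P_i]) ≥ ρ(k)/(40k²) ≥ λ_k/(80k²), and φ_G(P_i) ≤ ℓ·ρ(ℓ). -/

import Mathlib

open Finset

/-- Weighted degree of a vertex. -/
noncomputable def deg {V : Type*} [Fintype V] (w : V → V → ℝ) (v : V) : ℝ :=
  ∑ u, w v u

/-- Volume of a set of vertices. -/
noncomputable def vol {V : Type*} [Fintype V] (w : V → V → ℝ) (S : Finset V) : ℝ :=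
  ∑ v ∈ S, deg w v

/-- Total weight of edges from `S` to `T \ S`. -/
noncomputable def eW {V : Type*} [DecidableEq V] (w : V → V → ℝ) (S T : Finset V) : ℝ :=
  ∑ u ∈ S, ∑ v ∈ T \ S, w u v

/-- Conductance of `S` in `G`. -/
noncomputable def phi {V : Type*} [Fintype V] [DecidableEq V] (w : V → V → ℝ)
    (S : Finset V) : ℝ :=
  eW w S Finset.univ / vol w S

/-- Volume of `S ⊆ P` inside the induced subgraph `G[P]`. -/
noncomputable def volIn {V : Type*} [DecidableEq V] (w : V → V → ℝ) (P S : Finset V) : ℝ :=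
  ∑ v ∈ S, ∑ u ∈ P, w v u

/-- `φ(G[P]) ≥ a` : every nonempty proper `S ⊊ P` with at most half of the induced volume
has induced conductance at least `a` (stated multiplicatively). -/
def inCondGE {V : Type*} [DecidableEq V] (w : V → V → ℝ) (P : Finset V) (a : ℝ) : Prop :=
  ∀ S : Finset V, S ⊆ P → S.Nonempty → S ≠ P →
    volIn w P S ≤ volIn w P P / 2 → a * volIn w P S ≤ eW w S P

/-- `ρ(k)`: the minimum over families of `k` pairwise disjoint nonempty subsets of the
maximum conductance. -/
noncomputable def rho {V : Type*} [Fintype V] [DecidableEq V] (w : V → V → ℝ) (k : ℕ) : ℝ :=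
  sInf { r | ∃ A : Fin k → Finset V, (∀ i, (A i).Nonempty) ∧
    (∀ i j, i ≠ j → Disjoint (A i) (A j)) ∧ r = ⨆ i, phi w (A i) }

/-- The normalized Laplacian `I - D^{-1/2} A D^{-1/2}`. -/
noncomputable def normLap {V : Type*} [Fintype V] [DecidableEq V] (w : V → V → ℝ) : Matrix V V ℝ :=
  1 - Matrix.of fun u v => w u v / (Real.sqrt (deg w u) * Real.sqrt (deg w v))

/-- `lam w k` is the `k`-th smallest eigenvalue (1-indexed) of the normalized Laplacian. -/
noncomputable def lam {V : Type*} [Fintype V] [DecidableEq V] (w : V → V → ℝ) (k : ℕ) : ℝ :=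
  if h : (normLap w).IsHermitian then
    ((Finset.univ.val.map h.eigenvalues).sort (· ≤ ·)).getD (k - 1) 0
  else 0

/-!
Suppose `ρ(k) > 0` and let `t = ρ(k) / k`. Since `ρ(1) = 0` and `ρ(k) = k * t`, there is
`1 ≤ ℓ < k` with `ρ(ℓ) ≤ ℓ * t` and `(ℓ + 1) * t ≤ ρ(ℓ + 1)`. Take an inclusion-minimal family of
cores `B i` attaining `ρ(ℓ)`, and among the partitions with `B i ⊆ P i` one of maximal weight inside
the parts. By maximality a set of non-core vertices of `P i` sends at most as much weight to any
other part as to the rest of `P i`, which gives `φ(P i) ≤ ℓ * ρ(ℓ)`.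

For the expansion of `P i`, cut it into `S` and `P i \ S`, named so that `S ∩ B i` has at most half
the volume of `B i`. Replacing `B i` by its two pieces `S ∩ B i` and `B i \ S` gives `ℓ + 1`
disjoint sets, so one piece has conductance at least `ρ(ℓ + 1)`; as the other one has conductance at
least `ρ(ℓ)` by minimality of the core, many edges join the two. The set `S \ B i` is disjoint from
all cores, so it has conductance at least `ρ(ℓ + 1)` too, and by maximality of the partition a
proportion `1 / ℓ` of its boundary stays in `P i`. This yields conductance at least
`t / (2 * (ℓ + 1)) ≥ ρ(k) / (2 * k ^ 2)` inside `P i`.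

The comparison `λ_k ≤ 2 * ρ(k)` is the min–max principle on the `k`-dimensional space of functions
that are constant on each set of a family attaining `ρ(k)` and vanish elsewhere.
-/

section EdgeWeight

variable {V : Type*}

/-- Total weight of the ordered pairs in `A × B`: it specialises to `vol`, `eW` and `volIn`, and
unlike `eW` it is biadditive. -/
noncomputable def edgeWeight (w : V → V → ℝ) (A B : Finset V) : ℝ :=
  ∑ u ∈ A, ∑ v ∈ B, w u v

variable {w : V → V → ℝ} {A B : Finset V}

theorem edgeWeight_comm (hsym : ∀ u v, w u v = w v u) (A B : Finset V) :
    edgeWeight w A B = edgeWeight w B A := by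
  simp only [edgeWeight]
  rw [sum_comm]
  simp only [hsym]

theorem edgeWeight_nonneg (hnn : ∀ u v, 0 ≤ w u v) (A B : Finset V) : 0 ≤ edgeWeight w A B :=
  sum_nonneg fun _ _ => sum_nonneg fun _ _ => hnn _ _

theorem edgeWeight_mono {C D : Finset V} (hnn : ∀ u v, 0 ≤ w u v) (hAB : A ⊆ B) (hCD : C ⊆ D) :
    edgeWeight w A C ≤ edgeWeight w B D :=
  (sum_le_sum fun _ _ => sum_le_sum_of_subset_of_nonneg hCD fun _ _ _ => hnn _ _).trans
    (sum_le_sum_of_subset_of_nonneg hAB fun _ _ _ => sum_nonneg fun _ _ => hnn _ _)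

theorem vol_nonneg [Fintype V] (hnn : ∀ u v, 0 ≤ w u v) (A : Finset V) : 0 ≤ vol w A :=
  edgeWeight_nonneg hnn A univ

theorem vol_pos [Fintype V] (hdeg : ∀ v, 0 < deg w v) (hA : A.Nonempty) : 0 < vol w A :=
  sum_pos (fun v _ => hdeg v) hA

variable [DecidableEq V]

theorem edgeWeight_eq_add_sdiff_left (C : Finset V) (h : A ⊆ B) :
    edgeWeight w B C = edgeWeight w A C + edgeWeight w (B \ A) C := by
  rw [edgeWeight, ← sum_sdiff h, add_comm]
  rfl

theorem edgeWeight_eq_add_sdiff_right (C : Finset V) (h : A ⊆ B) :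
    edgeWeight w C B = edgeWeight w C A + edgeWeight w C (B \ A) := by
  simp only [edgeWeight, ← sum_add_distrib]
  exact sum_congr rfl fun u _ => by rw [← sum_sdiff h, add_comm]

theorem edgeWeight_union_self (hsym : ∀ u v, w u v = w v u) (h : Disjoint A B) :
    edgeWeight w (A ∪ B) (A ∪ B) =
      edgeWeight w A A + 2 * edgeWeight w A B + edgeWeight w B B := by
  rw [edgeWeight_eq_add_sdiff_left _ subset_union_left, union_sdiff_cancel_left h,
    edgeWeight_eq_add_sdiff_right A subset_union_left,
    edgeWeight_eq_add_sdiff_right B subset_union_left, union_sdiff_cancel_left h,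
    edgeWeight_comm hsym B A]
  ring

variable [Fintype V]

theorem edgeWeight_compl_of_subset (h : A ⊆ B) :
    edgeWeight w A Aᶜ = edgeWeight w A (B \ A) + edgeWeight w A Bᶜ := by
  rw [edgeWeight_eq_add_sdiff_right A (compl_subset_compl.2 h), compl_sdiff_compl, add_comm]

theorem vol_eq_add_sdiff (h : A ⊆ B) : vol w B = vol w A + vol w (B \ A) :=
  edgeWeight_eq_add_sdiff_left univ h

theorem volIn_le_vol (hnn : ∀ u v, 0 ≤ w u v) (P A : Finset V) : volIn w P A ≤ vol w A :=
  edgeWeight_mono hnn subset_rfl (subset_univ P)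

theorem le_phi_iff (hdeg : ∀ v, 0 < deg w v) (hA : A.Nonempty) {r : ℝ} :
    r ≤ phi w A ↔ r * vol w A ≤ edgeWeight w A Aᶜ :=
  le_div_iff₀ (vol_pos hdeg hA)

theorem phi_le_iff (hdeg : ∀ v, 0 < deg w v) (hA : A.Nonempty) {r : ℝ} :
    phi w A ≤ r ↔ edgeWeight w A Aᶜ ≤ r * vol w A :=
  div_le_iff₀ (vol_pos hdeg hA)

theorem phi_nonneg (hnn : ∀ u v, 0 ≤ w u v) (A : Finset V) : 0 ≤ phi w A :=
  div_nonneg (edgeWeight_nonneg hnn A _) (vol_nonneg hnn A)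

theorem phi_univ : phi w univ = 0 := by
  simp [phi, eW]

end EdgeWeight

theorem inCondGE.anti {V : Type*} [DecidableEq V] {w : V → V → ℝ} (hnn : ∀ u v, 0 ≤ w u v)
    {P : Finset V} {a b : ℝ} (hab : a ≤ b) (h : inCondGE w P b) : inCondGE w P a :=
  fun S hSP hS hne hvol =>
    (mul_le_mul_of_nonneg_right hab (edgeWeight_nonneg hnn S P)).trans (h S hSP hS hne hvol)

theorem inCondGE_zero {V : Type*} [DecidableEq V] {w : V → V → ℝ} (hnn : ∀ u v, 0 ≤ w u v)
    (P : Finset V) : inCondGE w P 0 := fun S _ _ _ _ => by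
  rw [zero_mul]
  exact edgeWeight_nonneg hnn S _

section Rho

open Function

/-- The families of sets over which `rho` minimizes. -/
structure IsDisjointFamily {V ι : Type*} (A : ι → Finset V) : Prop where
  nonempty : ∀ i, (A i).Nonempty
  disjoint : Pairwise (Disjoint on A)

/-- The disjoint families attaining `rho w k`. -/
structure IsOptimalFamily {V : Type*} [Fintype V] [DecidableEq V] (w : V → V → ℝ) {k : ℕ}
    (A : Fin k → Finset V) : Prop extends IsDisjointFamily A where
  phi_le : ∀ i, phi w (A i) ≤ rho w k

/-- The optimal families that are minimal for pointwise inclusion: their sets are the cores around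
which the parts of the partition are grown. -/
def IsCoreFamily {V : Type*} [Fintype V] [DecidableEq V] (w : V → V → ℝ) {k : ℕ}
    (B : Fin k → Finset V) : Prop :=
  Minimal (IsOptimalFamily w) B

theorem isDisjointFamily_univ {V ι : Type*} [Fintype V] [Nonempty V] [Subsingleton ι] :
    IsDisjointFamily fun _ : ι => (univ : Finset V) :=
  ⟨fun _ => univ_nonempty, Subsingleton.pairwise⟩

theorem IsDisjointFamily.update {V ι : Type*} [DecidableEq ι] {A : ι → Finset V}
    (hA : IsDisjointFamily A) {i : ι} {C : Finset V} (hC : C.Nonempty) (hCA : C ⊆ A i) :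
    IsDisjointFamily (update A i C) where
  nonempty := (forall_update_iff A fun _ => Finset.Nonempty).2 ⟨hC, fun j _ => hA.nonempty j⟩
  disjoint _ _ hjl :=
    have hle : Function.update A i C ≤ A := update_le_self_iff.2 hCA
    (hA.disjoint hjl).mono (hle _) (hle _)

theorem IsDisjointFamily.cons {V : Type*} {k : ℕ} {A : Fin k → Finset V}
    (hA : IsDisjointFamily A) {C : Finset V} (hC : C.Nonempty) (hCA : ∀ i, Disjoint C (A i)) :
    IsDisjointFamily (Fin.cons C A : Fin (k + 1) → Finset V) where
  nonempty := Fin.cases hC hA.nonempty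
  disjoint i j hij := by
    cases i using Fin.cases <;> cases j using Fin.cases
    · exact absurd rfl hij
    · exact hCA _
    · exact (hCA _).symm
    · exact hA.disjoint fun h => hij (congrArg Fin.succ h)

variable {V : Type*} [Fintype V] [DecidableEq V] {w : V → V → ℝ} {k : ℕ}

theorem rho_eq_sInf_image (w : V → V → ℝ) (k : ℕ) :
    rho w k =
      sInf ((fun A : Fin k → Finset V => ⨆ i, phi w (A i)) '' {A | IsDisjointFamily A}) := by
  refine congrArg sInf (Set.ext fun r => exists_congr fun A => ⟨?_, ?_⟩)
  · rintro ⟨hn, hd, rfl⟩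
    exact ⟨⟨hn, hd⟩, rfl⟩
  · rintro ⟨⟨hn, hd⟩, rfl⟩
    exact ⟨hn, hd, rfl⟩

theorem rho_nonneg (hnn : ∀ u v, 0 ≤ w u v) (k : ℕ) : 0 ≤ rho w k := by
  rw [rho_eq_sInf_image]
  apply Real.sInf_nonneg
  rintro _ ⟨A, _, rfl⟩
  exact Real.iSup_nonneg fun i => phi_nonneg hnn _

theorem IsDisjointFamily.exists_rho_le_phi [NeZero k] {A : Fin k → Finset V}
    (hA : IsDisjointFamily A) : ∃ i, rho w k ≤ phi w (A i) := by
  obtain ⟨i, hi⟩ := exists_eq_ciSup_of_finite (f := fun i => phi w (A i))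
  refine ⟨i, ?_⟩
  rw [hi, rho_eq_sInf_image]
  exact csInf_le (Set.toFinite _).bddBelow ⟨A, hA, rfl⟩

theorem exists_isOptimalFamily (w : V → V → ℝ) (hk : k ≤ Fintype.card V) :
    ∃ A : Fin k → Finset V, IsOptimalFamily w A := by
  obtain ⟨e⟩ : Nonempty (Fin k ↪ V) := Function.Embedding.nonempty_of_card_le (by simpa using hk)
  have hne : {A : Fin k → Finset V | IsDisjointFamily A}.Nonempty :=
    ⟨fun i => {e i}, fun i => singleton_nonempty _,
      fun i j hij => disjoint_singleton.2 (e.injective.ne hij)⟩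
  obtain ⟨A, hA, hrho⟩ :=
    (hne.image fun A => ⨆ i, phi w (A i)).csInf_mem (Set.toFinite _)
  refine ⟨A, hA, fun i => ?_⟩
  rw [rho_eq_sInf_image, ← hrho]
  exact le_ciSup (f := fun i => phi w (A i)) (Set.finite_range _).bddAbove i

theorem exists_isCoreFamily (w : V → V → ℝ) (hk : k ≤ Fintype.card V) :
    ∃ B : Fin k → Finset V, IsCoreFamily w B :=
  exists_minimal_of_wellFoundedLT _ (exists_isOptimalFamily w hk)

theorem rho_one [Nonempty V] (hnn : ∀ u v, 0 ≤ w u v) : rho w 1 = 0 := by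
  obtain ⟨_, hle⟩ := isDisjointFamily_univ.exists_rho_le_phi (w := w) (k := 1)
  exact (hle.trans_eq phi_univ).antisymm (rho_nonneg hnn 1)

theorem IsDisjointFamily.rho_succ_le_phi_or {A : Fin k → Finset V} (hA : IsDisjointFamily A)
    {C : Finset V} (hC : C.Nonempty) (hCA : ∀ i, Disjoint C (A i)) :
    rho w (k + 1) ≤ phi w C ∨ ∃ i, rho w (k + 1) ≤ phi w (A i) := by
  obtain ⟨j, hj⟩ := (hA.cons hC hCA).exists_rho_le_phi (w := w)
  cases j using Fin.cases with
  | zero => exact .inl hj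
  | succ i => exact .inr ⟨i, hj⟩

namespace IsOptimalFamily

variable {B : Fin k → Finset V} {C : Finset V} {i : Fin k}

theorem rho_succ_le_phi (hB : IsOptimalFamily w B) (hlt : rho w k < rho w (k + 1))
    (hC : C.Nonempty) (hCB : ∀ i, Disjoint C (B i)) : rho w (k + 1) ≤ phi w C :=
  (hB.rho_succ_le_phi_or hC hCB).resolve_right fun ⟨i, hi⟩ =>
    (hlt.trans_le (hi.trans (hB.phi_le i))).false

theorem rho_succ_le_phi_or_sdiff (hB : IsOptimalFamily w B) (hlt : rho w k < rho w (k + 1))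
    (hC : C.Nonempty) (hCB : C ⊆ B i) (hne : (B i \ C).Nonempty) :
    rho w (k + 1) ≤ phi w C ∨ rho w (k + 1) ≤ phi w (B i \ C) := by
  have hdisj (j : Fin k) : Disjoint C (update B i (B i \ C) j) := by
    rcases eq_or_ne j i with rfl | hji
    · simpa only [update_self] using disjoint_sdiff
    · simpa only [update_of_ne hji] using (hB.disjoint hji.symm).mono_left hCB
  refine ((hB.update hne sdiff_subset).rho_succ_le_phi_or hC hdisj).imp_right ?_
  rintro ⟨j, hj⟩
  rcases eq_or_ne j i with rfl | hji
  · simpa only [update_self] using hj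
  · rw [update_of_ne hji] at hj
    exact absurd (hj.trans (hB.phi_le j)) hlt.not_ge

theorem edgeWeight_compl_le (hB : IsOptimalFamily w B) (hdeg : ∀ v, 0 < deg w v) (i : Fin k) :
    edgeWeight w (B i) (B i)ᶜ ≤ rho w k * vol w (B i) :=
  (phi_le_iff hdeg (hB.nonempty i)).1 (hB.phi_le i)

theorem rho_succ_mul_vol_le (hB : IsOptimalFamily w B) (hdeg : ∀ v, 0 < deg w v)
    (hlt : rho w k < rho w (k + 1)) (hCB : ∀ i, Disjoint C (B i)) :
    rho w (k + 1) * vol w C ≤ edgeWeight w C Cᶜ := by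
  rcases C.eq_empty_or_nonempty with rfl | hC
  · simp [vol, edgeWeight]
  · exact (le_phi_iff hdeg hC).1 (hB.rho_succ_le_phi hlt hC hCB)

end IsOptimalFamily

namespace IsCoreFamily

variable {B : Fin k → Finset V} {C : Finset V} {i : Fin k}

theorem rho_lt_phi_of_ssubset (hB : IsCoreFamily w B) (hC : C.Nonempty)
    (hCB : C ⊂ B i) : rho w k < phi w C := by
  by_contra! hle
  have hopt : IsOptimalFamily w (update B i C) :=
    ⟨hB.1.update hC hCB.subset,
      (forall_update_iff B fun _ S => phi w S ≤ rho w k).2 ⟨hle, fun j _ => hB.1.phi_le j⟩⟩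
  have hBC : B i ⊆ update B i C i := hB.2 hopt (update_le_self_iff.2 hCB.subset) i
  rw [update_self] at hBC
  exact hCB.not_subset hBC

theorem rho_mul_vol_le_of_ssubset (hB : IsCoreFamily w B)
    (hdeg : ∀ v, 0 < deg w v) (hCB : C ⊂ B i) : rho w k * vol w C ≤ edgeWeight w C Cᶜ := by
  rcases C.eq_empty_or_nonempty with rfl | hC
  · simp [vol, edgeWeight]
  · exact (le_phi_iff hdeg hC).1 (hB.rho_lt_phi_of_ssubset hC hCB).le

theorem edgeWeight_compl_le_add (hB : IsCoreFamily w B)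
    (hsym : ∀ u v, w u v = w v u) (hdeg : ∀ v, 0 < deg w v) (hCB : C ⊆ B i) :
    edgeWeight w C (B i)ᶜ ≤ edgeWeight w C (B i \ C) + rho w k * vol w C := by
  rcases C.eq_empty_or_nonempty with rfl | hC
  · simp [vol, edgeWeight]
  have hrest := hB.rho_mul_vol_le_of_ssubset hdeg (sdiff_ssubset hCB hC)
  have hwhole := hB.1.edgeWeight_compl_le hdeg i
  rw [edgeWeight_compl_of_subset sdiff_subset, Finset.sdiff_sdiff_eq_self hCB,
    edgeWeight_comm hsym _ C] at hrest
  rw [edgeWeight_eq_add_sdiff_left _ hCB, vol_eq_add_sdiff hCB] at hwhole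
  linarith

theorem rho_sub_rho_mul_vol_le (hB : IsCoreFamily w B)
    (hsym : ∀ u v, w u v = w v u) (hdeg : ∀ v, 0 < deg w v)
    (hlt : rho w k < rho w (k + 1)) (hCB : C ⊆ B i) (hvol : vol w C ≤ vol w (B i \ C)) :
    (rho w (k + 1) - rho w k) * vol w C ≤ 2 * edgeWeight w C (B i \ C) := by
  rcases C.eq_empty_or_nonempty with rfl | hC
  · simp [vol, edgeWeight]
  have hrest : (B i \ C).Nonempty := by
    rw [nonempty_iff_ne_empty]
    intro h
    have : vol w C ≤ 0 := by simpa only [h, vol, sum_empty] using hvol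
    exact this.not_gt (vol_pos hdeg hC)
  rcases hB.1.rho_succ_le_phi_or_sdiff hlt hC hCB hrest with h | h
  · have hin := hB.edgeWeight_compl_le_add hsym hdeg hCB
    rw [le_phi_iff hdeg hC, edgeWeight_compl_of_subset hCB] at h
    linarith
  · have hout := hB.edgeWeight_compl_le_add hsym hdeg (sdiff_subset (s := B i) (t := C))
    rw [le_phi_iff hdeg hrest, edgeWeight_compl_of_subset sdiff_subset] at h
    rw [Finset.sdiff_sdiff_eq_self hCB, edgeWeight_comm hsym _ C] at h hout
    calc (rho w (k + 1) - rho w k) * vol w C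
        ≤ (rho w (k + 1) - rho w k) * vol w (B i \ C) :=
          mul_le_mul_of_nonneg_left hvol (sub_nonneg.2 hlt.le)
      _ ≤ 2 * edgeWeight w C (B i \ C) := by linarith

end IsCoreFamily

end Rho

section Partition

open Function

/-- `P` is a partition of the vertices with `B i ⊆ P i` such that moving vertices of `P i` outside
the core `B i` to another part does not increase the weight inside the parts. -/
structure IsStablePartition {V ι : Type*} [DecidableEq V] (w : V → V → ℝ) (B P : ι → Finset V) :
    Prop where
  disjoint : Pairwise (Disjoint on P)
  exists_mem : ∀ v, ∃ i, v ∈ P i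
  subset : ∀ i, B i ⊆ P i
  edgeWeight_le : ∀ ⦃i j⦄, i ≠ j → ∀ ⦃Z⦄, Z ⊆ P i \ B i →
    edgeWeight w Z (P j) ≤ edgeWeight w Z (P i \ Z)

theorem exists_forall_mem_imp_eq {V ι : Type*} [Nonempty ι] {B : ι → Finset V}
    (hB : Pairwise (Disjoint on B)) : ∃ f : V → ι, ∀ i, ∀ v ∈ B i, f v = i := by
  classical
  refine ⟨fun v => if h : ∃ i, v ∈ B i then h.choose else Classical.arbitrary ι, fun i v hv => ?_⟩
  have h : ∃ i, v ∈ B i := ⟨i, hv⟩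
  simp only [dif_pos h]
  exact hB.eq (not_disjoint_iff.2 ⟨v, h.choose_spec, hv⟩)

/-- The set of vertices to which `f` gives the label `i`; labellings encode partitions. -/
def labelClass {V ι : Type*} [Fintype V] [DecidableEq ι] (f : V → ι) (i : ι) : Finset V :=
  {v | f v = i}

theorem mem_labelClass {V ι : Type*} [Fintype V] [DecidableEq ι] {f : V → ι} {i : ι} {v : V} :
    v ∈ labelClass f i ↔ f v = i := by
  simp [labelClass]

variable {V ι : Type*} [DecidableEq V] {w : V → V → ℝ}

section Reassign

variable [Fintype V] [DecidableEq ι]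

theorem labelClass_piecewise_of_ne {f : V → ι} {i j l : ι} {Z : Finset V}
    (hZ : Z ⊆ labelClass f i) (hli : l ≠ i) (hlj : l ≠ j) :
    labelClass (Z.piecewise (fun _ => j) f) l = labelClass f l := by
  ext v
  have hv := @hZ v
  simp only [mem_labelClass, Finset.piecewise] at hv ⊢
  grind

theorem labelClass_piecewise_source {f : V → ι} {i j : ι} (hij : i ≠ j) (Z : Finset V) :
    labelClass (Z.piecewise (fun _ => j) f) i = labelClass f i \ Z := by
  ext v
  simp only [mem_labelClass, mem_sdiff, Finset.piecewise]
  grind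

theorem labelClass_piecewise_target (f : V → ι) (j : ι) (Z : Finset V) :
    labelClass (Z.piecewise (fun _ => j) f) j = labelClass f j ∪ Z := by
  ext v
  simp only [mem_labelClass, mem_union, Finset.piecewise]
  grind

theorem sum_edgeWeight_piecewise_sub [Fintype ι] (hsym : ∀ u v, w u v = w v u) {f : V → ι}
    {i j : ι} (hij : i ≠ j) {Z : Finset V} (hZ : Z ⊆ labelClass f i) :
    (let g := Z.piecewise (fun _ => j) f
      ∑ l, (edgeWeight w (labelClass g l) (labelClass g l) -
        edgeWeight w (labelClass f l) (labelClass f l))) =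
      2 * (edgeWeight w Z (labelClass f j) - edgeWeight w Z (labelClass f i \ Z)) := by
  have hdisj : Disjoint (labelClass f j) Z :=
    disjoint_left.2 fun v hv hvZ =>
      hij ((mem_labelClass.1 (hZ hvZ)).symm.trans (mem_labelClass.1 hv))
  have hsource := edgeWeight_union_self hsym (sdiff_disjoint (s := Z) (t := labelClass f i))
  have htarget := edgeWeight_union_self hsym hdisj
  rw [sdiff_union_of_subset hZ, edgeWeight_comm hsym _ Z] at hsource
  rw [edgeWeight_comm hsym _ Z] at htarget
  dsimp only
  rw [Fintype.sum_eq_add i j hij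
    (fun l hl => by rw [labelClass_piecewise_of_ne hZ hl.1 hl.2, sub_self]),
    labelClass_piecewise_source hij, labelClass_piecewise_target, htarget, hsource]
  ring

end Reassign

theorem exists_isStablePartition [Finite V] [Finite ι] [Nonempty ι] (hsym : ∀ u v, w u v = w v u)
    {B : ι → Finset V} (hB : Pairwise (Disjoint on B)) :
    ∃ P : ι → Finset V, IsStablePartition w B P := by
  classical
  have := Fintype.ofFinite V
  have := Fintype.ofFinite ι
  obtain ⟨f, hf, hmax⟩ := Set.exists_max_image {f : V → ι | ∀ i, ∀ v ∈ B i, f v = i}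
    (fun f => ∑ i, edgeWeight w (labelClass f i) (labelClass f i)) (Set.toFinite _)
    (exists_forall_mem_imp_eq hB)
  refine ⟨labelClass f, ⟨fun i j hij => disjoint_left.2 fun v hvi hvj => hij ?_,
    fun v => ⟨f v, mem_labelClass.2 rfl⟩, fun i v hv => mem_labelClass.2 (hf i v hv),
    fun i j hij Z hZ => ?_⟩⟩
  · exact (mem_labelClass.1 hvi).symm.trans (mem_labelClass.1 hvj)
  have hmove : ∀ l, ∀ v ∈ B l, Z.piecewise (fun _ => j) f v = l := by
    intro l v hv
    have hvZ : v ∉ Z := fun hvZ => by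
      obtain ⟨hvi, hvB⟩ := mem_sdiff.1 (hZ hvZ)
      rw [mem_labelClass, hf l v hv] at hvi
      exact hvB (hvi ▸ hv)
    rw [piecewise_eq_of_notMem _ _ _ hvZ, hf l v hv]
  have hle := sub_nonpos.2 (hmax _ hmove)
  rw [← sum_sub_distrib, sum_edgeWeight_piecewise_sub hsym hij (hZ.trans sdiff_subset)] at hle
  linarith

namespace IsStablePartition

variable [Fintype V] [Fintype ι] {B P : ι → Finset V}

theorem edgeWeight_compl_part [DecidableEq ι] (hP : IsStablePartition w B P) (i : ι)
    (Z : Finset V) :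
    edgeWeight w Z (P i)ᶜ = ∑ j ∈ univ.erase i, edgeWeight w Z (P j) := by
  have hcompl : (P i)ᶜ = (univ.erase i).biUnion P := by
    ext v
    obtain ⟨j, hj⟩ := hP.exists_mem v
    have huniq (l : ι) (hl : v ∈ P l) : l = j := hP.disjoint.eq (not_disjoint_iff.2 ⟨v, hl, hj⟩)
    simp only [mem_compl, mem_biUnion, mem_erase, mem_univ, and_true]
    grind
  simp only [edgeWeight]
  rw [sum_comm (s := univ.erase i), hcompl]
  refine sum_congr rfl fun u _ => ?_
  rw [sum_biUnion fun _ _ _ _ h => hP.disjoint h]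

theorem edgeWeight_compl_le (hP : IsStablePartition w B P) {i : ι} {Z : Finset V}
    (hZ : Z ⊆ P i \ B i) :
    edgeWeight w Z Zᶜ ≤ Fintype.card ι * edgeWeight w Z (P i \ Z) := by
  classical
  rw [edgeWeight_compl_of_subset (hZ.trans sdiff_subset), hP.edgeWeight_compl_part,
    ← card_univ, ← nsmul_eq_mul, ← sum_const, ← add_sum_erase _ _ (mem_univ i)]
  gcongr with j hj
  exact hP.edgeWeight_le (ne_of_mem_erase hj).symm hZ

theorem edgeWeight_part_compl_le (hP : IsStablePartition w B P) (hsym : ∀ u v, w u v = w v u)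
    (hnn : ∀ u v, 0 ≤ w u v) (i : ι) :
    edgeWeight w (P i) (P i)ᶜ ≤ Fintype.card ι * edgeWeight w (B i) (B i)ᶜ := by
  have hcard : (1 : ℝ) ≤ Fintype.card ι := mod_cast Fintype.card_pos_iff.2 ⟨i⟩
  have hout := hP.edgeWeight_compl_le (subset_refl (P i \ B i))
  rw [edgeWeight_compl_of_subset sdiff_subset, Finset.sdiff_sdiff_eq_self (hP.subset i),
    edgeWeight_comm hsym _ (B i)] at hout
  rw [edgeWeight_eq_add_sdiff_left _ (hP.subset i), edgeWeight_compl_of_subset (hP.subset i)]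
  calc edgeWeight w (B i) (P i)ᶜ + edgeWeight w (P i \ B i) (P i)ᶜ
      ≤ 1 * edgeWeight w (B i) (P i)ᶜ
          + (Fintype.card ι - 1) * edgeWeight w (B i) (P i \ B i) := by linarith
    _ ≤ Fintype.card ι * edgeWeight w (B i) (P i)ᶜ
          + Fintype.card ι * edgeWeight w (B i) (P i \ B i) := by
        gcongr <;> first | exact edgeWeight_nonneg hnn _ _ | linarith
    _ = Fintype.card ι * (edgeWeight w (B i) (P i \ B i) + edgeWeight w (B i) (P i)ᶜ) := by ring

end IsStablePartition

end Partition

section ExpanderPartition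

variable {V : Type*} [Fintype V] [DecidableEq V] {w : V → V → ℝ} {ℓ : ℕ} {t : ℝ}
  {B P : Fin ℓ → Finset V} {i : Fin ℓ} {S : Finset V}

theorem phi_part_le (hsym : ∀ u v, w u v = w v u) (hnn : ∀ u v, 0 ≤ w u v)
    (hdeg : ∀ v, 0 < deg w v) (hB : IsOptimalFamily w B) (hP : IsStablePartition w B P)
    (i : Fin ℓ) : phi w (P i) ≤ ℓ * rho w ℓ := by
  have hrho := rho_nonneg hnn ℓ (w := w)
  have hvol : vol w (B i) ≤ vol w (P i) := by
    rw [vol_eq_add_sdiff (hP.subset i)]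
    exact le_add_of_nonneg_right (vol_nonneg hnn _)
  rw [phi_le_iff hdeg ((hB.nonempty i).mono (hP.subset i))]
  calc edgeWeight w (P i) (P i)ᶜ
      ≤ ℓ * edgeWeight w (B i) (B i)ᶜ := by
        simpa only [Fintype.card_fin] using hP.edgeWeight_part_compl_le hsym hnn i
    _ ≤ ℓ * (rho w ℓ * vol w (B i)) := by gcongr; exact hB.edgeWeight_compl_le hdeg i
    _ ≤ ℓ * (rho w ℓ * vol w (P i)) := by gcongr
    _ = ℓ * rho w ℓ * vol w (P i) := (mul_assoc _ _ _).symm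

theorem edgeWeight_sdiff_core_compl_le (hsym : ∀ u v, w u v = w v u) (hnn : ∀ u v, 0 ≤ w u v)
    (hdeg : ∀ v, 0 < deg w v) (hB : IsCoreFamily w B) (hP : IsStablePartition w B P)
    (hS : S ⊆ P i) :
    edgeWeight w (S \ B i) (S \ B i)ᶜ ≤
      ℓ * (edgeWeight w S (P i \ S) + rho w ℓ * vol w (S ∩ B i)) := by
  have hsplit := edgeWeight_eq_add_sdiff_left (w := w) (P i \ S) (inter_subset_left (s₁ := S)
    (s₂ := B i))
  rw [sdiff_inter_self_left] at hsplit
  have hcore : edgeWeight w (S ∩ B i) (B i)ᶜ ≤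
      edgeWeight w (S ∩ B i) (P i \ S) + rho w ℓ * vol w (S ∩ B i) := by
    refine (hB.edgeWeight_compl_le_add hsym hdeg inter_subset_right).trans ?_
    gcongr
    refine edgeWeight_mono hnn subset_rfl fun v hv => ?_
    have := @hP.subset i v
    grind
  have hrest : edgeWeight w (S \ B i) (P i \ (S \ B i)) ≤
      edgeWeight w (S \ B i) (P i \ S) + edgeWeight w (S ∩ B i) (B i)ᶜ := by
    rw [edgeWeight_eq_add_sdiff_right (A := P i \ S) _ (by gcongr; exact sdiff_subset)]
    gcongr
    have hinter : (P i \ (S \ B i)) \ (P i \ S) = S ∩ B i := by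
      ext v
      have := @hS v
      grind
    rw [hinter, edgeWeight_comm hsym]
    exact edgeWeight_mono hnn subset_rfl fun v hv => mem_compl.2 (mem_sdiff.1 hv).2
  calc edgeWeight w (S \ B i) (S \ B i)ᶜ
      ≤ ℓ * edgeWeight w (S \ B i) (P i \ (S \ B i)) := by
        simpa only [Fintype.card_fin] using hP.edgeWeight_compl_le (sdiff_subset_sdiff hS le_rfl)
    _ ≤ ℓ * (edgeWeight w S (P i \ S) + rho w ℓ * vol w (S ∩ B i)) := by
        gcongr
        linarith

theorem mul_vol_inter_core_le (hsym : ∀ u v, w u v = w v u) (hnn : ∀ u v, 0 ≤ w u v)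
    (hdeg : ∀ v, 0 < deg w v) (hB : IsCoreFamily w B) (hP : IsStablePartition w B P)
    (ht : 0 < t) (hgap : t ≤ rho w (ℓ + 1) - rho w ℓ) (S : Finset V)
    (hvol : vol w (S ∩ B i) ≤ vol w (B i \ S)) :
    t * vol w (S ∩ B i) ≤ 2 * edgeWeight w S (P i \ S) := by
  have hcore := hB.rho_sub_rho_mul_vol_le (C := S ∩ B i) hsym hdeg (sub_pos.1 (ht.trans_le hgap))
    inter_subset_right (by rwa [sdiff_inter_self_right])
  rw [sdiff_inter_self_right] at hcore
  calc t * vol w (S ∩ B i)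
      ≤ (rho w (ℓ + 1) - rho w ℓ) * vol w (S ∩ B i) := by gcongr; exact vol_nonneg hnn _
    _ ≤ 2 * edgeWeight w (S ∩ B i) (B i \ S) := hcore
    _ ≤ 2 * edgeWeight w S (P i \ S) := by
        gcongr
        exact edgeWeight_mono hnn inter_subset_left (sdiff_subset_sdiff (hP.subset i) le_rfl)

theorem rho_succ_mul_vol_sdiff_core_le (hsym : ∀ u v, w u v = w v u) (hnn : ∀ u v, 0 ≤ w u v)
    (hdeg : ∀ v, 0 < deg w v) (hB : IsCoreFamily w B) (hP : IsStablePartition w B P)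
    (hlt : rho w ℓ < rho w (ℓ + 1)) (hS : S ⊆ P i) :
    rho w (ℓ + 1) * vol w (S \ B i) ≤
      ℓ * (edgeWeight w S (P i \ S) + rho w ℓ * vol w (S ∩ B i)) := by
  refine (hB.1.rho_succ_mul_vol_le hdeg hlt fun j => ?_).trans
    (edgeWeight_sdiff_core_compl_le hsym hnn hdeg hB hP hS)
  rcases eq_or_ne j i with rfl | hji
  · exact sdiff_disjoint
  · exact (hP.disjoint hji).symm.mono (sdiff_subset.trans hS) (hP.subset j)

theorem mul_vol_le_edgeWeight_sdiff (hsym : ∀ u v, w u v = w v u) (hnn : ∀ u v, 0 ≤ w u v)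
    (hdeg : ∀ v, 0 < deg w v) (hB : IsCoreFamily w B) (hP : IsStablePartition w B P)
    (ht : 0 < t) (hr : rho w ℓ ≤ ℓ * t) (hr' : (ℓ + 1) * t ≤ rho w (ℓ + 1)) (hS : S ⊆ P i)
    (hvol : vol w (S ∩ B i) ≤ vol w (B i \ S)) :
    t * vol w S ≤ 2 * (ℓ + 1) * edgeWeight w S (P i \ S) := by
  have hgap : t ≤ rho w (ℓ + 1) - rho w ℓ := by linarith
  have hcore := mul_vol_inter_core_le hsym hnn hdeg hB hP ht hgap S hvol
  have hrest : (ℓ + 1) * (t * vol w (S \ B i)) ≤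
      (ℓ + 1) * (2 * ℓ * edgeWeight w S (P i \ S)) :=
    calc (ℓ + 1) * (t * vol w (S \ B i))
        = (ℓ + 1) * t * vol w (S \ B i) := (mul_assoc _ _ _).symm
      _ ≤ rho w (ℓ + 1) * vol w (S \ B i) := by gcongr; exact vol_nonneg hnn _
      _ ≤ ℓ * (edgeWeight w S (P i \ S) + rho w ℓ * vol w (S ∩ B i)) :=
        rho_succ_mul_vol_sdiff_core_le hsym hnn hdeg hB hP (by linarith) hS
      _ ≤ ℓ * (edgeWeight w S (P i \ S) + ℓ * t * vol w (S ∩ B i)) := by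
        gcongr
        exact vol_nonneg hnn _
      _ ≤ ℓ * (edgeWeight w S (P i \ S) + ℓ * (2 * edgeWeight w S (P i \ S))) := by
        rw [mul_assoc (ℓ : ℝ) t]
        gcongr
      _ ≤ (ℓ + 1) * (2 * ℓ * edgeWeight w S (P i \ S)) := by
        linarith [mul_nonneg ℓ.cast_nonneg (edgeWeight_nonneg hnn S (P i \ S))]
  have hsplit := vol_eq_add_sdiff (w := w) (inter_subset_left (s₁ := S) (s₂ := B i))
  rw [sdiff_inter_self_left] at hsplit
  calc t * vol w S = t * vol w (S ∩ B i) + t * vol w (S \ B i) := by rw [hsplit, mul_add]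
    _ ≤ 2 * edgeWeight w S (P i \ S) + 2 * ℓ * edgeWeight w S (P i \ S) :=
      add_le_add hcore (le_of_mul_le_mul_left hrest (by positivity))
    _ = 2 * (ℓ + 1) * edgeWeight w S (P i \ S) := by ring

theorem inCondGE_part (hsym : ∀ u v, w u v = w v u) (hnn : ∀ u v, 0 ≤ w u v)
    (hdeg : ∀ v, 0 < deg w v) (hB : IsCoreFamily w B) (hP : IsStablePartition w B P)
    (ht : 0 < t) (hr : rho w ℓ ≤ ℓ * t) (hr' : (ℓ + 1) * t ≤ rho w (ℓ + 1)) (i : Fin ℓ) :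
    inCondGE w (P i) (t / (2 * (ℓ + 1))) := by
  intro S hS _ _ hhalf
  suffices h : t * volIn w (P i) S ≤ 2 * (ℓ + 1) * edgeWeight w S (P i \ S) by
    rw [div_mul_eq_mul_div, div_le_iff₀' (by positivity)]
    exact h
  rcases le_total (vol w (S ∩ B i)) (vol w (B i \ S)) with hvol | hvol
  · calc t * volIn w (P i) S ≤ t * vol w S := by gcongr; exact volIn_le_vol hnn _ _
      _ ≤ 2 * (ℓ + 1) * edgeWeight w S (P i \ S) :=
        mul_vol_le_edgeWeight_sdiff hsym hnn hdeg hB hP ht hr hr' hS hvol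
  · have hcompl : volIn w (P i) S ≤ volIn w (P i) (P i \ S) := by
      have hsplit : volIn w (P i) (P i) = volIn w (P i) S + volIn w (P i) (P i \ S) :=
        edgeWeight_eq_add_sdiff_left _ hS
      linarith
    have hinter : (P i \ S) ∩ B i = B i \ S := by grind [hP.subset i]
    have hsdiff : B i \ (P i \ S) = S ∩ B i := by grind [hP.subset i]
    have hswap := mul_vol_le_edgeWeight_sdiff hsym hnn hdeg hB hP ht hr hr'
      (sdiff_subset (s := P i) (t := S)) (by rwa [hinter, hsdiff])
    rw [Finset.sdiff_sdiff_eq_self hS, edgeWeight_comm hsym] at hswap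
    calc t * volIn w (P i) S ≤ t * volIn w (P i) (P i \ S) := by gcongr
      _ ≤ t * vol w (P i \ S) := by gcongr; exact volIn_le_vol hnn _ _
      _ ≤ 2 * (ℓ + 1) * edgeWeight w S (P i \ S) := hswap

theorem exists_partition_inCondGE (hsym : ∀ u v, w u v = w v u) (hnn : ∀ u v, 0 ≤ w u v)
    (hdeg : ∀ v, 0 < deg w v) (hℓ : 1 ≤ ℓ) (hcard : ℓ ≤ Fintype.card V)
    (ht : 0 < t) (hr : rho w ℓ ≤ ℓ * t) (hr' : (ℓ + 1) * t ≤ rho w (ℓ + 1)) :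
    ∃ P : Fin ℓ → Finset V, IsDisjointFamily P ∧ (∀ v, ∃ i, v ∈ P i) ∧
      ∀ i, inCondGE w (P i) (t / (2 * (ℓ + 1))) ∧ phi w (P i) ≤ ℓ * rho w ℓ := by
  obtain ⟨B, hB⟩ := exists_isCoreFamily w hcard
  have : Nonempty (Fin ℓ) := ⟨⟨0, hℓ⟩⟩
  obtain ⟨P, hP⟩ := exists_isStablePartition hsym hB.1.disjoint
  exact ⟨P, ⟨fun i => (hB.1.nonempty i).mono (hP.subset i), hP.disjoint⟩, hP.exists_mem,
    fun i => ⟨inCondGE_part hsym hnn hdeg hB hP ht hr hr' i,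
      phi_part_le hsym hnn hdeg hB.1 hP i⟩⟩

end ExpanderPartition

section Crossing

theorem exists_crossing {α : Type*} [LinearOrder α] {a b : ℕ → α} {m n : ℕ} (hmn : m < n)
    (hm : a m ≤ b m) (hn : b n ≤ a n) :
    ∃ l, m ≤ l ∧ l < n ∧ a l ≤ b l ∧ b (l + 1) ≤ a (l + 1) := by
  induction n, hmn using Nat.le_induction with
  | base => exact ⟨m, le_rfl, m.lt_succ_self, hm, hn⟩
  | succ n hmn ih =>
    rcases le_total (a n) (b n) with h | h
    · exact ⟨n, (Nat.le_succ m).trans hmn, n.lt_succ_self, h, hn⟩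
    · obtain ⟨l, hml, hln, hl⟩ := ih h
      exact ⟨l, hml, hln.trans n.lt_succ_self, hl⟩

variable {V : Type*} [Fintype V] [DecidableEq V] {w : V → V → ℝ} {k : ℕ}

theorem exists_rho_crossing [Nonempty V] (hnn : ∀ u v, 0 ≤ w u v) (hk : 2 ≤ k) :
    ∃ ℓ : ℕ, 1 ≤ ℓ ∧ ℓ < k ∧ rho w ℓ ≤ ℓ * (rho w k / k) ∧
      (ℓ + 1) * (rho w k / k) ≤ rho w (ℓ + 1) := by
  have hk0 : (0 : ℝ) < k := by positivity
  have hrho := rho_nonneg hnn k (w := w)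
  obtain ⟨ℓ, h1, hk, hl, hl'⟩ := exists_crossing (a := rho w) (b := fun l => l * (rho w k / k)) hk
    (by rw [rho_one hnn]; positivity) (mul_div_cancel₀ _ hk0.ne').le
  exact ⟨ℓ, h1, hk, hl, mod_cast hl'⟩

theorem exists_expander_partition (hsym : ∀ u v, w u v = w v u) (hnn : ∀ u v, 0 ≤ w u v)
    (hdeg : ∀ v, 0 < deg w v) (hk : 2 ≤ k) (hcard : k ≤ Fintype.card V) :
    ∃ (ℓ : ℕ) (P : Fin ℓ → Finset V), 1 ≤ ℓ ∧ ℓ < k ∧ IsDisjointFamily P ∧ (∀ v, ∃ i, v ∈ P i) ∧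
      ∀ i, inCondGE w (P i) (rho w k / (2 * k ^ 2)) ∧ phi w (P i) ≤ ℓ * rho w ℓ := by
  have : Nonempty V := Fintype.card_pos_iff.1 (by lia)
  have hk0 : (0 : ℝ) < k := by positivity
  rcases (rho_nonneg hnn k).eq_or_lt' with hrho | hrho
  · refine ⟨1, fun _ => univ, le_rfl, hk, isDisjointFamily_univ, fun v => ⟨0, mem_univ v⟩,
      fun _ => ⟨?_, ?_⟩⟩
    · rw [hrho, zero_div]
      exact inCondGE_zero hnn univ
    · rw [phi_univ, rho_one hnn, mul_zero]
  obtain ⟨ℓ, h1, hℓk, hr, hr'⟩ := exists_rho_crossing hnn hk (w := w)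
  obtain ⟨P, hP, hcover, hcond⟩ :=
    exists_partition_inCondGE hsym hnn hdeg h1 (hℓk.le.trans hcard) (div_pos hrho hk0) hr hr'
  have hconst : rho w k / (2 * k ^ 2) ≤ rho w k / k / (2 * (ℓ + 1)) := by
    have hℓ : (ℓ : ℝ) + 1 ≤ k := mod_cast hℓk
    rw [div_div, show (2 * k ^ 2 : ℝ) = k * (2 * k) by ring]
    gcongr
  exact ⟨ℓ, P, h1, hℓk, hP, hcover, fun i => ⟨(hcond i).1.anti hnn hconst, (hcond i).2⟩⟩

end Crossing

section Spectral

theorem countP_lt_getD_le {α : Type*} [LinearOrder α] {l : List α} (hl : l.SortedLE) {n : ℕ}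
    (hn : n < l.length) (d : α) : l.countP (· < l.getD n d) ≤ n := by
  have hdrop : (l.drop n).countP (· < l.getD n d) = 0 := by
    rw [List.countP_eq_zero]
    intro y hy
    obtain ⟨m, hm, rfl⟩ := List.mem_iff_getElem.1 hy
    rw [List.length_drop] at hm
    rw [List.getD_eq_getElem _ _ hn, List.getElem_drop]
    simpa using hl.getElem_le_getElem_of_le (Nat.le_add_right n m)
  calc l.countP (· < l.getD n d)
      = (l.take n).countP (· < l.getD n d) + (l.drop n).countP (· < l.getD n d) := by
        rw [← List.countP_append, List.take_append_drop]
    _ ≤ (l.take n).length := by rw [hdrop, add_zero]; exact List.countP_le_length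
    _ ≤ n := List.length_take_le n l

theorem card_filter_lt_sort_getD_le {ι α : Type*} [Fintype ι] [LinearOrder α] (g : ι → α)
    {n : ℕ} (hn : n < Fintype.card ι) (d : α) :
    #{i | g i < ((univ.val.map g).sort (· ≤ ·)).getD n d} ≤ n := by
  have hcount := countP_lt_getD_le
    (Multiset.pairwise_sort (univ.val.map g) (· ≤ ·)).sortedLE (n := n) (by simpa using hn) d
  rwa [← Multiset.coe_countP, Multiset.sort_eq, Multiset.countP_map] at hcount

section Hermitian

open Matrix

variable {𝕜 n : Type*} [RCLike 𝕜] [Fintype n] [DecidableEq n] {M : Matrix n n 𝕜}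

theorem re_inner_toEuclideanLin_eq_sum (hM : M.IsHermitian) (x : EuclideanSpace 𝕜 n) :
    RCLike.re (inner 𝕜 x (M.toEuclideanLin x)) =
      ∑ i, hM.eigenvalues i * ‖inner 𝕜 (hM.eigenvectorBasis i) x‖ ^ 2 := by
  have heig (i : n) : inner 𝕜 (hM.eigenvectorBasis i) (M.toEuclideanLin x) =
      hM.eigenvalues i * inner 𝕜 (hM.eigenvectorBasis i) x := by
    have hvec : M.toEuclideanLin (hM.eigenvectorBasis i) =
        hM.eigenvalues i • hM.eigenvectorBasis i := by
      ext j
      exact congrFun (hM.mulVec_eigenvectorBasis i) j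
    rw [← isSymmetric_toEuclideanLin_iff.2 hM, hvec, RCLike.real_smul_eq_coe_smul (K := 𝕜),
      inner_smul_left, RCLike.conj_ofReal]
  rw [← hM.eigenvectorBasis.sum_inner_mul_inner, map_sum]
  refine sum_congr rfl fun i _ => ?_
  rw [heig, mul_left_comm, RCLike.re_ofReal_mul, inner_mul_symm_re_eq_norm, norm_mul,
    norm_inner_symm x, sq]

theorem exists_ne_zero_mul_norm_sq_le_re_inner (hM : M.IsHermitian) {U : Type*} [AddCommGroup U]
    [Module 𝕜 U] [Module.Finite 𝕜 U] (T : U →ₗ[𝕜] EuclideanSpace 𝕜 n) {b : ℝ}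
    (hb : #{i | hM.eigenvalues i < b} < Module.finrank 𝕜 U) :
    ∃ c ≠ 0, b * ‖T c‖ ^ 2 ≤ RCLike.re (inner 𝕜 (T c) (M.toEuclideanLin (T c))) := by
  let coords : U →ₗ[𝕜] {i // hM.eigenvalues i < b} → 𝕜 :=
    LinearMap.pi fun i => innerₛₗ 𝕜 (hM.eigenvectorBasis i) ∘ₗ T
  have hker : coords.ker ≠ ⊥ := LinearMap.ker_ne_bot_of_finrank_lt (by
    rwa [Module.finrank_fintype_fun_eq_card, Fintype.card_subtype])
  obtain ⟨c, hc, hc0⟩ := Submodule.exists_mem_ne_zero_of_ne_bot hker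
  refine ⟨c, hc0, ?_⟩
  rw [re_inner_toEuclideanLin_eq_sum hM, ← hM.eigenvectorBasis.sum_sq_norm_inner_right, mul_sum]
  refine sum_le_sum fun i _ => ?_
  rcases lt_or_ge (hM.eigenvalues i) b with hi | hi
  · have hzero : inner 𝕜 (hM.eigenvectorBasis i) (T c) = 0 :=
      congrFun (LinearMap.mem_ker.1 hc) ⟨i, hi⟩
    simp [hzero]
  · gcongr

end Hermitian

variable {V : Type*} [Fintype V] {w : V → V → ℝ} {k : ℕ}

/-- The Dirichlet form of the weighted graph, each unordered pair being counted once. -/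
noncomputable def dirichletEnergy (w : V → V → ℝ) (f : V → ℝ) : ℝ :=
  (∑ u, ∑ v, w u v * (f u - f v) ^ 2) / 2

/-- The map `f ↦ D^{1/2} f`, which turns the form of `normLap` into the Dirichlet form and the
Euclidean norm into the degree-weighted one. -/
noncomputable def sqrtDegMul (w : V → V → ℝ) : (V → ℝ) →ₗ[ℝ] EuclideanSpace ℝ V :=
  (WithLp.linearEquiv 2 ℝ (V → ℝ)).symm.toLinearMap ∘ₗ
    LinearMap.mulLeft ℝ fun v => √(deg w v)

theorem sqrtDegMul_apply (w : V → V → ℝ) (f : V → ℝ) (v : V) :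
    sqrtDegMul w f v = √(deg w v) * f v :=
  rfl

theorem norm_sqrtDegMul_sq (hdeg : ∀ v, 0 < deg w v) (f : V → ℝ) :
    ‖sqrtDegMul w f‖ ^ 2 = ∑ v, deg w v * f v ^ 2 := by
  simp only [EuclideanSpace.real_norm_sq_eq, sqrtDegMul_apply, mul_pow, Real.sq_sqrt (hdeg _).le]

theorem dirichletEnergy_eq (hsym : ∀ u v, w u v = w v u) (f : V → ℝ) :
    dirichletEnergy w f = ∑ v, deg w v * f v ^ 2 - ∑ u, ∑ v, w u v * (f u * f v) := by
  have hleft : ∑ u, ∑ v, w u v * f u ^ 2 = ∑ v, deg w v * f v ^ 2 := by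
    simp only [deg, sum_mul]
  have hright : ∑ u, ∑ v, w u v * f v ^ 2 = ∑ v, deg w v * f v ^ 2 := by
    rw [sum_comm, ← hleft]
    simp only [hsym]
  have hexpand (u v : V) : w u v * (f u - f v) ^ 2 =
      w u v * f u ^ 2 + w u v * f v ^ 2 - 2 * (w u v * (f u * f v)) := by ring
  simp only [dirichletEnergy, hexpand, sum_sub_distrib, sum_add_distrib, ← mul_sum, hleft, hright]
  ring

variable [DecidableEq V]

theorem normLap_isHermitian (hsym : ∀ u v, w u v = w v u) : (normLap w).IsHermitian := by
  refine Matrix.isHermitian_one.sub (Matrix.IsHermitian.ext fun u v => ?_)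
  simp only [Matrix.of_apply, hsym v u, mul_comm √(deg w v), star_trivial]

theorem normLap_sqrtDegMul_apply (hdeg : ∀ v, 0 < deg w v) (f : V → ℝ) (u : V) :
    (normLap w).toEuclideanLin (sqrtDegMul w f) u =
      √(deg w u) * f u - (∑ v, w u v * f v) / √(deg w u) := by
  have hmul (v : V) : w u v / (√(deg w u) * √(deg w v)) * (√(deg w v) * f v) =
      w u v * f v / √(deg w u) := by
    have := Real.sqrt_pos.2 (hdeg v)
    field_simp
  rw [Matrix.ofLp_toLpLin, Matrix.toLin'_apply, normLap, Matrix.sub_mulVec, Matrix.one_mulVec,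
    Pi.sub_apply, sum_div]
  simp only [sqrtDegMul_apply, Matrix.mulVec, dotProduct, Matrix.of_apply, hmul]

theorem inner_normLap_sqrtDegMul (hsym : ∀ u v, w u v = w v u) (hdeg : ∀ v, 0 < deg w v)
    (f : V → ℝ) :
    inner ℝ (sqrtDegMul w f) ((normLap w).toEuclideanLin (sqrtDegMul w f)) =
      dirichletEnergy w f := by
  rw [dirichletEnergy_eq hsym, PiLp.inner_apply, ← sum_sub_distrib]
  refine sum_congr rfl fun u _ => ?_
  have hsq := Real.mul_self_sqrt (hdeg u).le
  have hpos := Real.sqrt_pos.2 (hdeg u)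
  have hpull : ∑ v, w u v * (f u * f v) = f u * ∑ v, w u v * f v := by
    rw [mul_sum]
    exact sum_congr rfl fun v _ => mul_left_comm _ _ _
  rw [normLap_sqrtDegMul_apply hdeg, sqrtDegMul_apply, hpull, RCLike.inner_apply', conj_trivial]
  field_simp
  rw [sq, hsq]
  ring

theorem card_eigenvalues_lt_lam (hsym : ∀ u v, w u v = w v u) (hk : 1 ≤ k)
    (hcard : k ≤ Fintype.card V) :
    #{i | (normLap_isHermitian hsym).eigenvalues i < lam w k} < k := by
  have h := card_filter_lt_sort_getD_le (normLap_isHermitian hsym).eigenvalues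
    (show k - 1 < Fintype.card V by lia) 0
  rw [lam, dif_pos (normLap_isHermitian hsym)]
  lia

theorem le_card_of_lam_pos (hlam : 0 < lam w k) : k ≤ Fintype.card V := by
  by_contra! hlt
  refine hlam.ne' ?_
  rw [lam]
  split_ifs
  · refine List.getD_eq_default _ _ ?_
    simpa using Nat.le_sub_one_of_lt hlt
  · rfl

end Spectral

section StepFunction

open Function

/-- The step functions `∑ i, c i • 1_{A i}`, the test functions comparing `lam` with `rho`. -/
noncomputable def stepFunction {V ι : Type*} [Fintype ι] (A : ι → Finset V) :
    (ι → ℝ) →ₗ[ℝ] V → ℝ :=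
  Fintype.linearCombination ℝ fun i => (A i : Set V).indicator 1

variable {V ι : Type*} [Fintype ι] {A : ι → Finset V}

theorem stepFunction_apply (A : ι → Finset V) (c : ι → ℝ) (v : V) :
    stepFunction A c v = ∑ i, c i * (A i : Set V).indicator 1 v := by
  simp [stepFunction, Fintype.linearCombination_apply]

theorem stepFunction_eq_zero (c : ι → ℝ) {v : V} (hv : ∀ i, v ∉ A i) :
    stepFunction A c v = 0 := by
  simp [stepFunction_apply, hv]

theorem stepFunction_eq_of_mem (hA : Pairwise (Disjoint on A)) (c : ι → ℝ) {i : ι} {v : V}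
    (hv : v ∈ A i) : stepFunction A c v = c i := by
  rw [stepFunction_apply, Fintype.sum_eq_single i]
  · simp [hv]
  · intro j hji
    simp [disjoint_right.1 (hA hji) hv]

theorem stepFunction_sq (hA : Pairwise (Disjoint on A)) (c : ι → ℝ) (v : V) :
    stepFunction A c v ^ 2 = stepFunction A (c ^ 2) v := by
  by_cases hv : ∃ i, v ∈ A i
  · obtain ⟨i, hi⟩ := hv
    simp only [stepFunction_eq_of_mem hA _ hi, Pi.pow_apply]
  · push Not at hv
    simp [stepFunction_eq_zero _ hv]

theorem sum_indicator_le_one (hA : Pairwise (Disjoint on A)) (v : V) :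
    ∑ i, (A i : Set V).indicator (1 : V → ℝ) v ≤ 1 := by
  have hone : ∑ i, (A i : Set V).indicator (1 : V → ℝ) v = stepFunction A 1 v := by
    simp [stepFunction_apply]
  rw [hone]
  by_cases hv : ∃ i, v ∈ A i
  · obtain ⟨i, hi⟩ := hv
    exact (stepFunction_eq_of_mem hA _ hi).le
  · push Not at hv
    simp [stepFunction_eq_zero _ hv]

-- The differences `d i` of the indicators lie in `{-1, 0, 1}`, so `d i = d i ^ 3`, and at most two
-- of them are nonzero: this is Cauchy–Schwarz for `∑ i, (c i * d i) * d i ^ 2`.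
theorem sq_stepFunction_sub_le (hA : Pairwise (Disjoint on A)) (c : ι → ℝ) (u v : V) :
    (stepFunction A c u - stepFunction A c v) ^ 2 ≤
      2 * ∑ i, c i ^ 2 *
        ((A i : Set V).indicator (1 : V → ℝ) u - (A i : Set V).indicator (1 : V → ℝ) v) ^ 2 := by
  set d : ι → ℝ := fun i => (A i : Set V).indicator 1 u - (A i : Set V).indicator 1 v with hd
  have hcube (i : ι) : d i * d i ^ 2 = d i := by
    by_cases hu : u ∈ A i <;> by_cases hv : v ∈ A i <;> simp [hd, hu, hv]
  have hsq (i : ι) : (d i ^ 2) ^ 2 ≤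
      (A i : Set V).indicator (1 : V → ℝ) u + (A i : Set V).indicator (1 : V → ℝ) v := by
    by_cases hu : u ∈ A i <;> by_cases hv : v ∈ A i <;> simp [hd, hu, hv]
  have hdiff : stepFunction A c u - stepFunction A c v = ∑ i, c i * d i * d i ^ 2 := by
    simp only [mul_assoc, hcube]
    simp only [stepFunction_apply, hd, mul_sub, sum_sub_distrib]
  have hcard : ∑ i, (d i ^ 2) ^ 2 ≤ 2 := by
    refine (sum_le_sum fun i _ => hsq i).trans ?_
    rw [sum_add_distrib]
    linarith [sum_indicator_le_one hA u, sum_indicator_le_one hA v]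
  calc (stepFunction A c u - stepFunction A c v) ^ 2
      = (∑ i, c i * d i * d i ^ 2) ^ 2 := by rw [hdiff]
    _ ≤ (∑ i, (c i * d i) ^ 2) * ∑ i, (d i ^ 2) ^ 2 := sum_mul_sq_le_sq_mul_sq _ _ _
    _ ≤ 2 * ∑ i, c i ^ 2 * d i ^ 2 := by
        simp only [mul_pow, mul_comm (2 : ℝ)]
        gcongr

variable [Fintype V] {w : V → V → ℝ}

theorem sum_mul_indicator (g : V → ℝ) (C : Finset V) :
    ∑ v, g v * (C : Set V).indicator 1 v = ∑ v ∈ C, g v := by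
  classical
  simp [Set.indicator_apply]

theorem sum_deg_mul_stepFunction_sq (w : V → V → ℝ) (hA : Pairwise (Disjoint on A)) (c : ι → ℝ) :
    ∑ v, deg w v * stepFunction A c v ^ 2 = ∑ i, c i ^ 2 * vol w (A i) := by
  simp only [stepFunction_sq hA]
  simp only [stepFunction_apply, mul_sum, Pi.pow_apply]
  rw [sum_comm]
  refine sum_congr rfl fun i _ => ?_
  simp only [mul_left_comm (deg w _), ← mul_sum, sum_mul_indicator, vol]

theorem dirichletEnergy_indicator [DecidableEq V] (hsym : ∀ u v, w u v = w v u) (C : Finset V) :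
    dirichletEnergy w ((C : Set V).indicator 1) = edgeWeight w C Cᶜ := by
  have hsq (v : V) : (C : Set V).indicator (1 : V → ℝ) v ^ 2 = (C : Set V).indicator 1 v := by
    by_cases hv : v ∈ C <;> simp [hv]
  have hinner : ∑ u, ∑ v,
      w u v * ((C : Set V).indicator 1 u * (C : Set V).indicator 1 v) = edgeWeight w C C := by
    simp only [mul_left_comm (w _ _), ← mul_sum, sum_mul_indicator]
    simp only [mul_comm, sum_mul_indicator, edgeWeight]
  have hvol : vol w C = edgeWeight w C C + edgeWeight w C Cᶜ :=
    edgeWeight_eq_add_sdiff_right C (subset_univ C)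
  rw [dirichletEnergy_eq hsym, hinner]
  simp only [hsq, sum_mul_indicator]
  exact sub_eq_of_eq_add' hvol

theorem dirichletEnergy_stepFunction_le [DecidableEq V] (hsym : ∀ u v, w u v = w v u)
    (hnn : ∀ u v, 0 ≤ w u v) (hA : Pairwise (Disjoint on A)) (c : ι → ℝ) :
    dirichletEnergy w (stepFunction A c) ≤ 2 * ∑ i, c i ^ 2 * edgeWeight w (A i) (A i)ᶜ := by
  calc dirichletEnergy w (stepFunction A c)
      ≤ (∑ u, ∑ v, w u v * (2 * ∑ i, c i ^ 2 * ((A i : Set V).indicator (1 : V → ℝ) u -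
          (A i : Set V).indicator (1 : V → ℝ) v) ^ 2)) / 2 := by
        unfold dirichletEnergy
        gcongr with u _ v _
        · exact hnn u v
        · exact sq_stepFunction_sub_le hA c u v
    _ = 2 * ∑ i, c i ^ 2 * dirichletEnergy w ((A i : Set V).indicator 1) := by
        simp only [dirichletEnergy, mul_sum, sum_div]
        rw [sum_comm_cycle]
        exact sum_congr rfl fun i _ => sum_congr rfl fun u _ => sum_congr rfl fun v _ => by ring
    _ = 2 * ∑ i, c i ^ 2 * edgeWeight w (A i) (A i)ᶜ := by
        simp only [dirichletEnergy_indicator hsym]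

end StepFunction

section EigenvalueBound

variable {V : Type*} [Fintype V] [DecidableEq V] {w : V → V → ℝ} {k : ℕ}

theorem lam_le_two_mul_rho (hsym : ∀ u v, w u v = w v u) (hnn : ∀ u v, 0 ≤ w u v)
    (hdeg : ∀ v, 0 < deg w v) (hk : 1 ≤ k) (hcard : k ≤ Fintype.card V) :
    lam w k ≤ 2 * rho w k := by
  obtain ⟨A, hA⟩ := exists_isOptimalFamily w hcard
  obtain ⟨c, hc, hle⟩ := exists_ne_zero_mul_norm_sq_le_re_inner (normLap_isHermitian hsym)
    (sqrtDegMul w ∘ₗ stepFunction A) (b := lam w k)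
    (by simpa using card_eigenvalues_lt_lam hsym hk hcard)
  rw [LinearMap.comp_apply, inner_normLap_sqrtDegMul hsym hdeg, norm_sqrtDegMul_sq hdeg,
    sum_deg_mul_stepFunction_sq w hA.disjoint, RCLike.re_to_real] at hle
  have hpos : 0 < ∑ i, c i ^ 2 * vol w (A i) := by
    obtain ⟨i, hi⟩ := Function.ne_iff.1 hc
    exact sum_pos' (fun j _ => mul_nonneg (sq_nonneg _) (vol_nonneg hnn _))
      ⟨i, mem_univ i, mul_pos (sq_pos_of_ne_zero hi) (vol_pos hdeg (hA.nonempty i))⟩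
  refine le_of_mul_le_mul_right ?_ hpos
  calc lam w k * ∑ i, c i ^ 2 * vol w (A i)
      ≤ dirichletEnergy w (stepFunction A c) := hle
    _ ≤ 2 * ∑ i, c i ^ 2 * edgeWeight w (A i) (A i)ᶜ :=
        dirichletEnergy_stepFunction_le hsym hnn hA.disjoint c
    _ ≤ 2 * ∑ i, c i ^ 2 * (rho w k * vol w (A i)) := by
        gcongr with i
        exact hA.edgeWeight_compl_le hdeg i
    _ = 2 * rho w k * ∑ i, c i ^ 2 * vol w (A i) := by
        simp only [mul_left_comm _ (rho w k), ← mul_sum, mul_assoc]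

end EigenvalueBound

theorem stmt0_general {V : Type*} [Fintype V] [DecidableEq V] {w : V → V → ℝ}
    (hsym : ∀ u v, w u v = w v u) (hnn : ∀ u v, 0 ≤ w u v) (hdeg : ∀ v, 0 < deg w v) {k : ℕ}
    (hk : 2 ≤ k) (hcard : k ≤ Fintype.card V) :
    lam w k ≤ 2 * rho w k ∧
    ∃ (ℓ : ℕ) (P : Fin ℓ → Finset V), 1 ≤ ℓ ∧ ℓ ≤ k - 1 ∧
      (∀ i, (P i).Nonempty) ∧
      (∀ i j, i ≠ j → Disjoint (P i) (P j)) ∧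
      (∀ v : V, ∃ i, v ∈ P i) ∧
      (∀ i, inCondGE w (P i) (rho w k / (2 * (k : ℝ) ^ 2)) ∧
        phi w (P i) ≤ (ℓ : ℝ) * rho w ℓ) := by
  obtain ⟨ℓ, P, h1, hℓk, hP, hcover, hcond⟩ := exists_expander_partition hsym hnn hdeg hk hcard
  exact ⟨lam_le_two_mul_rho hsym hnn hdeg (one_le_two.trans hk) hcard, ℓ, P, h1,
    Nat.le_sub_one_of_lt hℓk, hP.nonempty, fun _ _ hij => hP.disjoint hij, hcover, hcond⟩

theorem stmt0 {V : Type*} [Fintype V] [DecidableEq V] (w : V → V → ℝ)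
    (hsym : ∀ u v, w u v = w v u) (hnonneg : ∀ u v, 0 ≤ w u v)
    (hdeg : ∀ v, 0 < deg w v) (k : ℕ) (hk : 2 ≤ k) (hlam : 0 < lam w k) :
    lam w k / (80 * (k : ℝ) ^ 2) ≤ rho w k / (40 * (k : ℝ) ^ 2) ∧
    ∃ (ℓ : ℕ) (P : Fin ℓ → Finset V), 1 ≤ ℓ ∧ ℓ ≤ k - 1 ∧
      (∀ i, (P i).Nonempty) ∧
      (∀ i j, i ≠ j → Disjoint (P i) (P j)) ∧
      (∀ v : V, ∃ i, v ∈ P i) ∧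
      (∀ i, inCondGE w (P i) (rho w k / (40 * (k : ℝ) ^ 2)) ∧
        phi w (P i) ≤ (ℓ : ℝ) * rho w ℓ) := by
  obtain ⟨hle, ℓ, P, h1, hℓk, hne, hdisj, hcover, hcond⟩ :=
    stmt0_general hsym hnonneg hdeg hk (le_card_of_lam_pos hlam)
  have hrho := rho_nonneg hnonneg k (w := w)
  exact ⟨(div_le_div_of_nonneg_right hle (by positivity)).trans_eq (by ring), ℓ, P, h1, hℓk, hne,
    hdisj, hcover, fun i => ⟨(hcond i).1.anti hnonneg (by gcongr; norm_num), (hcond i).2⟩⟩
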